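/- arXiv:math/0104148 — 4 statements merged into one kernel-verified Lean document; each statement's English description precedes it below -/
import Mathlib

section
/- Let G be a finite cyclic group of even order n, let −1 denote the unique element of order 2 in G, let t be a divisor of n and h a positive integer, and set e := ord₂(h), τ := ord₂(t). Then |(−1)·G^h ∩ G^t| / |(−1)·G^h| = 0 if ord₂(n) = τ and τ ≤ e, and equals gcd(t,h)/t otherwise, where G^m := {x^m : x ∈ G} and (−1)·G^h := {−x^h : x ∈ G}. -/
/-!
Write `H = G^h`, `K = G^t`, `d = gcd(t, h)` and `s = n / t`, where `n = |G|`.  Because `G` is cyclic,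
a power subgroup is a torsion subgroup: `G^m` is the kernel of `x ↦ x ^ (n / gcd(n, m))`
(`range_pow_eq_ker_pow`).  In particular `K` is the kernel of `x ↦ x ^ s`.

*Size.*  The map `x ↦ x ^ s` sends `H` onto `G^(hs)` with kernel `H ∩ K`, and `G^(hs)` has order
`n / gcd(n, hs) = t / d`, so `|H ∩ K| / |H| = d / t` (`card_div_mul_card_inf`).  If the coset `u H`
meets `K`, then `u H ∩ K` is a coset of `H ∩ K` and has the same density.

*Nonemptiness.*  The coset `u H` meets `K` iff `u ^ s ∈ G^(hs)`.  This group is the kernel of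
`x ↦ x ^ (t / d)`, so the condition is `u ^ (n / d) = 1`, i.e. `2 ∣ n / d`
(`coset_inter_nonempty_iff`).  Comparing 2-adic valuations, it fails exactly when
`ord₂ n = ord₂ t ≤ ord₂ h` (`two_dvd_div_gcd_iff`).
-/

open Polynomial Filter
open scoped Classical Pointwise

noncomputable section

/-- The reduction of a rational number mod `p`. -/
def ratRed (g : ℚ) (p : ℕ) : ZMod p := (g.num : ZMod p) * ((g.den : ℕ) : ZMod p)⁻¹

/-- `ord_p(g) = 0`: `p` divides neither the numerator nor the denominator of `g`. -/
def OrdZero (g : ℚ) (p : ℕ) : Prop := ¬ (p : ℤ) ∣ g.num ∧ ¬ p ∣ g.den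

/-- The residual index `r_g(p) = [(ℤ/pℤ)^* : ⟨g mod p⟩]`. -/
def resIndex (g : ℚ) (p : ℕ) : ℕ := (p - 1) / orderOf (ratRed g p)

/-- The decomposition `g = ± g₀ ^ h` with `g₀ > 0` not an exact power of a rational,
`h ≥ 1`, for `g ∈ ℚ ∖ {-1,0,1}`. -/
structure Decomp (g g₀ : ℚ) (h : ℕ) : Prop where
  ne_neg_one : g ≠ -1
  ne_zero : g ≠ 0
  ne_one : g ≠ 1
  g₀_pos : 0 < g₀
  not_power : ¬ ∃ (r : ℚ) (k : ℕ), 2 ≤ k ∧ r ^ k = g₀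
  h_pos : 1 ≤ h
  eq : g = g₀ ^ h ∨ g = -(g₀ ^ h)

instance (f : ℚ[X]) : NumberField (SplittingField f) where

/-- The splitting field `ℚ(ζ_m, g^{1/m})` of `X^m - g` over `ℚ`. -/
abbrev splitField (g : ℚ) (m : ℕ) : Type := SplittingField (X ^ m - C g)

/-- The quadratic field `ℚ(√g₀)`, realised as the splitting field of `X² - g₀`. -/
abbrev quadField (g₀ : ℚ) : Type := SplittingField (X ^ 2 - C g₀)

/-- `d(g₀)`, the discriminant of the quadratic field `ℚ(√g₀)`. -/
def discQuad (g₀ : ℚ) : ℤ := NumberField.discr (quadField g₀)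

/-- The field `ℚ(ζ_m, √g₀)`. -/
abbrev cycQuadField (g₀ : ℚ) (m : ℕ) : Type :=
  SplittingField ((X ^ m - 1) * (X ^ 2 - C g₀))

/-- A rational prime `p` splits completely in the number field `K`:
there are `[K:ℚ]` maximal ideals of the ring of integers above `p`. -/
def SplitsCompletely (K : Type*) [Field K] [NumberField K] (p : ℕ) : Prop :=
  Nat.card {P : Ideal (NumberField.RingOfIntegers K) //
      P.IsMaximal ∧ (p : NumberField.RingOfIntegers K) ∈ P} = Module.finrank ℚ K

/-- The number of primes `p ≤ x` satisfying the predicate `P`. -/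
def countPrimes (x : ℝ) (P : ℕ → Prop) : ℕ :=
  ((Finset.range (⌊x⌋₊ + 1)).filter fun p => p.Prime ∧ P p).card

/-- `N_{g,t}(x)`: the number of odd primes `p ≤ x` with `ord_p(g) = 0` and `r_g(p) = t`. -/
def Ngt (g : ℚ) (t : ℕ) (x : ℝ) : ℕ :=
  countPrimes x fun p => Odd p ∧ OrdZero g p ∧ resIndex g p = t

/-- `R_{g,t}(x)`: the number of odd primes `p ≤ x` with `ord_p(g) = 0` and `t ∣ r_g(p)`. -/
def Rgt (g : ℚ) (t : ℕ) (x : ℝ) : ℕ :=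
  countPrimes x fun p => Odd p ∧ OrdZero g p ∧ t ∣ resIndex g p

/-- `π(x; m, 1)`: the number of odd primes `p ≤ x` with `ord_p(g) = 0` and `p ≡ 1 (mod m)`. -/
def piCount (g : ℚ) (m : ℕ) (x : ℝ) : ℕ :=
  countPrimes x fun p => Odd p ∧ OrdZero g p ∧ p ≡ 1 [MOD m]

/-- `P_K(x)` restricted to odd primes `p` with `ord_p(g) = 0`. -/
def PKg (g : ℚ) (K : Type*) [Field K] [NumberField K] (x : ℝ) : ℕ :=
  countPrimes x fun p => Odd p ∧ OrdZero g p ∧ SplitsCompletely K p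

/-- The logarithmic integral `Li(x) = ∫₂ˣ dt / log t`. -/
def Li (x : ℝ) : ℝ := ∫ t in (2:ℝ)..x, 1 / Real.log t

/-- `ψ_d(p) = Σ_{ord χ = d} χ(g mod p)`, the sum over the complex multiplicative
characters of `(ℤ/pℤ)^*` of order exactly `d`. -/
def psiSum (g : ℚ) (p d : ℕ) : ℂ :=
  ∑ᶠ χ ∈ {χ : MulChar (ZMod p) ℂ | orderOf χ = d}, χ (ratRed g p)

/-- The finset of odd primes `p ≤ x` with `ord_p(g) = 0` and `p ≡ 1 (mod t)`. -/
def primesTo (g : ℚ) (t : ℕ) (x : ℝ) : Finset ℕ :=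
  (Finset.range (⌊x⌋₊ + 1)).filter fun p => p.Prime ∧ Odd p ∧ OrdZero g p ∧ p ≡ 1 [MOD t]

/-- The `linear' contribution `L_{g,t}(x)`. -/
def Lgt (g : ℚ) (h t : ℕ) (x : ℝ) : ℂ :=
  (1 / (t : ℂ)) * ∑ p ∈ primesTo g t x, ∑ d ∈ (Nat.gcd h t).divisors, psiSum g p d

/-- The `quadratic' contribution `Q_{g,t}(x)`. -/
def Qgt (g : ℚ) (h t : ℕ) (x : ℝ) : ℂ :=
  (1 / (t : ℂ)) * ∑ p ∈ primesTo g t x,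
    ∑ d ∈ (Nat.gcd (2 * h) t).divisors.filter (fun d => ¬ d ∣ h), psiSum g p d

/-- `M_{g,t}(x) = L_{g,t}(x) + Q_{g,t}(x)`. -/
def Mgt (g : ℚ) (h t : ℕ) (x : ℝ) : ℂ := Lgt g h t x + Qgt g h t x

/-- The weight `w_{g,t}(p)` of Theorem 1 of the paper. -/
def wgt (g g₀ : ℚ) (h t p : ℕ) : ℚ :=
  let e := padicValNat 2 h
  let τ := padicValNat 2 t
  let ht := h / Nat.gcd h t
  let ε₁ : ℚ := if τ < e then 0 else if τ = e then -1 else 1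
  if 0 < g ∧ p ≡ 1 [MOD t] ∧ Nat.gcd ((p - 1) / t) ht = 1 then
    1 + ε₁ / 2 * (1 + (-1 : ℚ) ^ ((p - 1) / 2 ^ e)) * (jacobiSym (discQuad g₀) p : ℚ)
  else if g < 0 ∧ ¬ 2 ∣ ht ∧ p ≡ 1 [MOD Nat.lcm (2 ^ (e + 1)) t] ∧
      Nat.gcd ((p - 1) / t) ht = 1 then
    1 + ε₁ * (-1 : ℚ) ^ ((p - 1) / 2 ^ (e + 1)) * (jacobiSym (discQuad g₀) p : ℚ)
  else if g < 0 ∧ 2 ∣ ht ∧ p ≡ 1 [MOD 2 * t] ∧ Nat.gcd ((p - 1) / (2 * t)) ht = 1 then 2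
  else 0

/-- `G^m = {x^m : x ∈ G}`. -/
def powSet (G : Type*) [Monoid G] (m : ℕ) : Set G := Set.range fun x : G => x ^ m

/-- `ρ`: the density `|a·G^{2h} ∩ G^t| / |G^{2h}|` in a group `G` of order `n`
(and `0` if `t ∤ n`). -/
def rhoDen (G : Type*) [Group G] (n : ℕ) (a : G) (h t : ℕ) : ℚ :=
  if t ∣ n then
    (((a • powSet G (2 * h)) ∩ powSet G t).ncard : ℚ) / ((powSet G (2 * h)).ncard : ℚ)
  else 0

/-- `r_{g,t}(p) = t_h · ρ_{sgn g, (d(g₀)/p), t}`, computed with respect to the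
generator `γ` of `(ℤ/pℤ)^*`. -/
def rgt (g g₀ : ℚ) (h t p : ℕ) (γ : (ZMod p)ˣ) : ℚ :=
  (t / Nat.gcd t h : ℕ) *
    rhoDen (ZMod p)ˣ (p - 1)
      ((if 0 < g then 1 else -1) * (if jacobiSym (discQuad g₀) p = 1 then 1 else γ ^ h)) h t

/-- The coefficients of the Dedekind zeta function of `K`: the number of ideals of
the ring of integers of `K` of absolute norm `n`. -/
def zetaCoeff (K : Type*) [Field K] [NumberField K] (n : ℕ) : ℂ :=
  (Nat.card {I : Ideal (NumberField.RingOfIntegers K) // Ideal.absNorm I = n} : ℂ)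

/-- The Riemann Hypothesis for the Dedekind zeta function `ζ_K` of a number field `K`:
any analytic continuation of the Dirichlet series `Σ_I N(I)^{-s}` off `s = 1` has all
its zeros in the critical strip on the line `Re s = 1/2`. -/
def DedekindRH (K : Type*) [Field K] [NumberField K] : Prop :=
  ∀ Z : ℂ → ℂ, (∀ s : ℂ, s ≠ 1 → AnalyticAt ℂ Z s) →
    (∀ s : ℂ, 1 < s.re → Z s = LSeries (zetaCoeff K) s) →
    ∀ s : ℂ, 0 < s.re → s.re < 1 → Z s = 0 → s.re = 1 / 2

/-- The Ramanujan sum `c_d(m)`. -/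
def ramanujanSum (d m : ℕ) : ℂ :=
  ∑ k ∈ (Finset.Icc 1 d).filter (fun k => Nat.gcd k d = 1),
    Complex.exp (2 * Real.pi * Complex.I * k * m / d)

/-- The sum `Σ_{ord χ = d} χ(γ)` over the complex characters of `G` of order exactly `d`. -/
def charOrdSum {G : Type*} [Group G] (d : ℕ) (γ : G) : ℂ :=
  ∑ᶠ χ ∈ {χ : G →* ℂˣ | orderOf χ = d}, ((χ γ : ℂˣ) : ℂ)

end

theorem div_gcd_mul_eq {n t s : ℕ} (hn : 0 < n) (hts : n = t * s) (h : ℕ) :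
    n / n.gcd (h * s) = t / t.gcd h := by
  subst hts
  rw [Nat.gcd_mul_right, Nat.mul_div_mul_right _ _ (Nat.pos_of_mul_pos_left hn)]

section CommCyclic

variable {G : Type*} [CommGroup G] [IsCyclic G] [Finite G]

/-- In a finite cyclic group, `G^m` is the subgroup of elements killed by `|G| / gcd(|G|, m)`:
it is contained in that subgroup and the two have the same order. -/
theorem range_pow_eq_ker_pow (m : ℕ) :
    (powMonoidHom m : G →* G).range =
      (powMonoidHom (Nat.card G / (Nat.card G).gcd m) : G →* G).ker := by
  apply Subgroup.eq_of_le_of_card_ge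
  · rintro _ ⟨x, rfl⟩
    rw [MonoidHom.mem_ker, powMonoidHom_apply, powMonoidHom_apply, ← pow_mul,
      ← Nat.mul_div_assoc _ (Nat.gcd_dvd_left _ _), mul_comm,
      Nat.mul_div_assoc _ (Nat.gcd_dvd_right _ _), pow_mul, pow_card_eq_one', one_pow]
  · rw [IsCyclic.card_powMonoidHom_range, IsCyclic.card_powMonoidHom_ker,
      Nat.gcd_eq_right (Nat.div_dvd_of_dvd (Nat.gcd_dvd_left _ _))]

theorem range_pow_eq_ker_of_mul {t s : ℕ} (hts : Nat.card G = t * s) :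
    (powMonoidHom t : G →* G).range = (powMonoidHom s : G →* G).ker := by
  have h0 : 0 < t * s := hts ▸ Nat.card_pos
  rw [range_pow_eq_ker_pow, hts, Nat.gcd_eq_right (Dvd.intro _ rfl),
    Nat.mul_div_cancel_left _ (Nat.pos_of_mul_pos_right h0)]

/-- `|G^h| = (t / gcd(t, h)) |G^h ∩ G^t|`: the first isomorphism theorem for `x ↦ x ^ s`
on `G^h`. -/
theorem card_div_mul_card_inf {t s : ℕ} (hts : Nat.card G = t * s) (h : ℕ) :
    Nat.card ((powMonoidHom h : G →* G).range ⊓ (powMonoidHom t : G →* G).range : Subgroup G) *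
      (t / t.gcd h) = Nat.card (powMonoidHom h : G →* G).range := by
  have hmap : (powMonoidHom h : G →* G).range.map (powMonoidHom s) =
      (powMonoidHom (h * s) : G →* G).range := by
    rw [MonoidHom.map_range]
    congr 1
    ext x
    simp [pow_mul]
  have h1 := Subgroup.relIndex_ker (powMonoidHom s : G →* G) (K := (powMonoidHom h : G →* G).range)
  rw [hmap, IsCyclic.card_powMonoidHom_range, div_gcd_mul_eq Nat.card_pos hts,
    ← range_pow_eq_ker_of_mul hts] at h1
  rw [← h1, ← Subgroup.inf_relIndex_left, ← Subgroup.relIndex_bot_left, ← Subgroup.relIndex_bot_left]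
  exact Subgroup.relIndex_mul_relIndex _ _ _ bot_le inf_le_left

/-- The coset `u G^h` meets `G^t` iff `u ^ (|G| / t) ∈ G^(h |G| / t)`, iff the order of `u`
divides `|G| / gcd(t, h)`. -/
theorem coset_inter_nonempty_iff {t s : ℕ} (hts : Nat.card G = t * s) (h : ℕ) (u : G) :
    (∃ x : G, u * x ^ h ∈ (powMonoidHom t : G →* G).range) ↔
      orderOf u ∣ Nat.card G / t.gcd h := by
  have h2 : Nat.card G / t.gcd h = s * (t / t.gcd h) := by
    rw [hts, mul_comm, Nat.mul_div_assoc _ (Nat.gcd_dvd_left _ _)]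
  have h3 : u ^ s ∈ (powMonoidHom (h * s) : G →* G).range ↔
      orderOf u ∣ Nat.card G / t.gcd h := by
    rw [range_pow_eq_ker_pow, div_gcd_mul_eq Nat.card_pos hts, MonoidHom.mem_ker, powMonoidHom_apply,
      ← pow_mul, ← h2, orderOf_dvd_iff_pow_eq_one]
  rw [← h3, range_pow_eq_ker_of_mul hts]
  simp only [MonoidHom.mem_ker, MonoidHom.mem_range, powMonoidHom_apply, mul_pow, ← pow_mul]
  constructor
  · rintro ⟨x, hx⟩
    exact ⟨x⁻¹, by rw [inv_pow]; exact (eq_inv_of_mul_eq_one_left hx).symm⟩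
  · rintro ⟨x, hx⟩
    exact ⟨x⁻¹, by rw [inv_pow, ← hx, mul_inv_cancel]⟩

end CommCyclic

/-- Two cosets of subgroups that meet in `y` intersect in the coset of `y`. -/
theorem smul_inter_eq_smul_inf {G : Type*} [Group G] (H K : Subgroup G) {u y : G}
    (hyH : u⁻¹ * y ∈ H) (hyK : y ∈ K) :
    (u • (H : Set G)) ∩ K = y • ((H ⊓ K : Subgroup G) : Set G) := by
  ext z
  simp only [Set.mem_inter_iff, Set.mem_smul_set_iff_inv_smul_mem, smul_eq_mul, SetLike.mem_coe,
    Subgroup.mem_inf]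
  refine and_congr ?_ ?_
  · rw [← H.mul_mem_cancel_left (y := y⁻¹ * z) hyH]
    simp [mul_assoc]
  · exact (K.mul_mem_cancel_left (K.inv_mem hyK)).symm

theorem two_dvd_div_gcd_iff {n t h : ℕ} (hn : n ≠ 0) (ht : t ∣ n) (hh : h ≠ 0) :
    2 ∣ n / t.gcd h ↔
      ¬ (padicValNat 2 n = padicValNat 2 t ∧ padicValNat 2 t ≤ padicValNat 2 h) := by
  have ht0 : t ≠ 0 := ne_zero_of_dvd_ne_zero hn ht
  obtain ⟨q, hq⟩ := (Nat.gcd_dvd_left t h).trans ht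
  have hd0 : t.gcd h ≠ 0 := Nat.gcd_ne_zero_left ht0
  have hq0 : q ≠ 0 := by rintro rfl; exact hn (by simpa using hq)
  have hdiv : n / t.gcd h = q := by
    conv_lhs => rw [hq]
    exact Nat.mul_div_cancel_left _ (Nat.pos_of_ne_zero hd0)
  have h1 : padicValNat 2 n = padicValNat 2 (t.gcd h) + padicValNat 2 q := by
    conv_lhs => rw [hq]
    exact padicValNat.mul hd0 hq0
  have h2 : padicValNat 2 (t.gcd h) = min (padicValNat 2 t) (padicValNat 2 h) := by
    simp only [← Nat.factorization_def _ Nat.prime_two, Nat.factorization_gcd ht0 hh,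
      Finsupp.inf_apply]
  have h3 : padicValNat 2 t ≤ padicValNat 2 n :=
    (padicValNat_dvd_iff_le hn).1 (pow_padicValNat_dvd.trans ht)
  rw [hdiv, dvd_iff_padicValNat_ne_zero hq0]
  omega

/-- the density of the coset `(-1)·G^h` in `G^t`, where `-1` is the
unique element of order `2` of the cyclic group `G` of even order `n`. -/
theorem stmt13 {G : Type*} [Group G] [IsCyclic G] [Fintype G] (n t h : ℕ)
    (hn : Fintype.card G = n) (hneven : 2 ∣ n) (u : G) (hu : orderOf u = 2)
    (ht : t ∣ n) (hh : 1 ≤ h) :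
    (((u • powSet G h) ∩ powSet G t).ncard : ℚ) / ((u • powSet G h).ncard : ℚ) =
      if padicValNat 2 n = padicValNat 2 t ∧ padicValNat 2 t ≤ padicValNat 2 h then 0
      else (Nat.gcd t h : ℚ) / (t : ℚ) := by
  -- `powMonoidHom` needs commutativity, which holds because `G` is cyclic.
  let _ : CommGroup G := IsCyclic.commGroup
  have hcard : Nat.card G = n := by rw [Nat.card_eq_fintype_card, hn]
  have hn0 : n ≠ 0 := hcard ▸ Nat.card_pos.ne'
  have ht0 : t ≠ 0 := ne_zero_of_dvd_ne_zero hn0 ht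
  obtain ⟨s, hs⟩ := ht
  have hts : Nat.card G = t * s := hcard.trans hs
  have hset (m : ℕ) : powSet G m = ((powMonoidHom m : G →* G).range : Set G) := rfl
  have key := coset_inter_nonempty_iff hts h u
  rw [hu, hcard, two_dvd_div_gcd_iff hn0 ⟨s, hs⟩ (by omega)] at key
  rw [hset, hset, Set.ncard_smul_set]
  split_ifs with hc
  · have hempty : (u • ((powMonoidHom h : G →* G).range : Set G)) ∩
        ((powMonoidHom t : G →* G).range : Set G) = ∅ := by
      rw [Set.eq_empty_iff_forall_notMem]
      rintro _ ⟨⟨_, ⟨x, rfl⟩, rfl⟩, hK⟩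
      exact key.1 ⟨x, hK⟩ hc
    rw [hempty, Set.ncard_empty, Nat.cast_zero, zero_div]
  · obtain ⟨x, hx⟩ := key.2 hc
    rw [smul_inter_eq_smul_inf _ _ (by simp) hx, Set.ncard_smul_set]
    have hmul := card_div_mul_card_inf hts h
    have hH : Nat.card (powMonoidHom h : G →* G).range ≠ 0 := Nat.card_pos.ne'
    rw [← Nat.card_coe_set_eq, ← Nat.card_coe_set_eq]
    simp only [SetLike.coe_sort_coe]
    have hd : t / t.gcd h * t.gcd h = t := Nat.div_mul_cancel (Nat.gcd_dvd_left _ _)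
    rw [div_eq_div_iff (by exact_mod_cast hH) (by exact_mod_cast ht0)]
    norm_cast
    rw [← hmul]
    nth_rewrite 2 [← hd]
    ring
end

section
/- Let G be a finite cyclic group of even order n with generator γ, let t be a divisor of n and h a positive integer, and set e := ord₂(h), τ := ord₂(t). Then: (i) |((−1)·G^{2h}) ∩ G^t| / |G^{2h}| = 0 if ord₂(n) = τ and τ ≤ e+1, and equals gcd(2h,t)/t otherwise; (ii) |((−1)·γ^h·G^{2h}) ∩ G^t| / |γ^h·G^{2h}| = 0 if either (ord₂(n) = τ and τ ≠ e+1) or (ord₂(n) ≥ τ+1 and τ ≥ e+1), and equals gcd(2h,t)/t otherwise. -/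
/-!
Write `d = gcd(2h, t)`. Since `γ` generates `G`, `γ ^ j` lies in `G ^ m` exactly when
`gcd(n, m) ∣ j`. So `γ ^ k • G ^ m` meets `G ^ t` iff `k` is a combination of `m`, `t` and `n`, that is,
iff `gcd(m, t) ∣ k` (as `t ∣ n`). If it does, the intersection is a coset of `G ^ m ∩ G ^ t`, the
subgroup of order `n / lcm(gcd(n, m), t)`, whence the density `gcd(m, t) / t`; this is
`coset_density`.

As `-1 = γ ^ (n / 2)`, it remains to decide whether `d` divides `k = n / 2` or `k = n / 2 + h`. In both
cases `d ∣ 2 * k`, so only the power of `2` matters: `d ∣ k` iff `2 ^ min(e + 1, τ) ∣ k`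
with `e = ord₂(h)`, `τ = ord₂(t)` (`gcd_dvd_iff_two_pow_dvd`). The case distinctions of the theorem come from comparing the `2`-adic
valuations of `n / 2` and `h`.
-/

open Polynomial Filter
open scoped Classical Pointwise

theorem powSet_eq_zpowers {G : Type*} [Group G] (γ : G)
    (hγ : ∀ x : G, x ∈ Subgroup.zpowers γ) (m : ℕ) :
    powSet G m = (Subgroup.zpowers (γ ^ m) : Set G) := by
  ext x
  simp only [powSet, Set.mem_range, SetLike.mem_coe, Subgroup.mem_zpowers_iff]
  constructor
  · rintro ⟨y, rfl⟩
    obtain ⟨i, rfl⟩ := Subgroup.mem_zpowers_iff.1 (hγ y)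
    exact ⟨i, by rw [← zpow_natCast, ← zpow_natCast, ← zpow_mul, ← zpow_mul, mul_comm]⟩
  · rintro ⟨i, rfl⟩
    exact ⟨γ ^ i, by rw [← zpow_natCast, ← zpow_natCast, ← zpow_mul, ← zpow_mul, mul_comm]⟩

theorem natCast_gcd_dvd_iff (a b : ℕ) (j : ℤ) :
    ((Nat.gcd a b : ℕ) : ℤ) ∣ j ↔ ∃ x y : ℤ, j = a * x + b * y := by
  constructor
  · rintro ⟨c, rfl⟩
    exact ⟨Nat.gcdA a b * c, Nat.gcdB a b * c, by rw [Nat.gcd_eq_gcd_ab]; ring⟩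
  · rintro ⟨x, y, rfl⟩
    exact dvd_add
      (Dvd.dvd.mul_right (Int.natCast_dvd_natCast.2 (Nat.gcd_dvd_left a b)) x)
      (Dvd.dvd.mul_right (Int.natCast_dvd_natCast.2 (Nat.gcd_dvd_right a b)) y)

theorem zpow_mem_zpowers_pow_iff {G : Type*} [Group G] (γ : G) (m : ℕ) (j : ℤ) :
    γ ^ j ∈ Subgroup.zpowers (γ ^ m) ↔ ((Nat.gcd (orderOf γ) m : ℕ) : ℤ) ∣ j := by
  rw [Subgroup.mem_zpowers_iff, natCast_gcd_dvd_iff]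
  simp only [← zpow_natCast, ← zpow_mul, zpow_eq_zpow_iff_modEq, Int.modEq_iff_dvd]
  constructor
  · rintro ⟨i, c, hc⟩
    exact ⟨c, i, by linarith⟩
  · rintro ⟨c, i, hc⟩
    exact ⟨i, c, by linarith⟩

theorem zpowers_pow_inf {G : Type*} [Group G] (γ : G)
    (hγ : ∀ x : G, x ∈ Subgroup.zpowers γ) (m t : ℕ) (ht : t ∣ orderOf γ) :
    Subgroup.zpowers (γ ^ m) ⊓ Subgroup.zpowers (γ ^ t) =
      Subgroup.zpowers (γ ^ (Nat.lcm (Nat.gcd (orderOf γ) m) t)) := by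
  ext x
  obtain ⟨j, rfl⟩ := Subgroup.mem_zpowers_iff.1 (hγ x)
  have hl : Nat.lcm (Nat.gcd (orderOf γ) m) t ∣ orderOf γ :=
    Nat.lcm_dvd (Nat.gcd_dvd_left _ _) ht
  rw [Subgroup.mem_inf, zpow_mem_zpowers_pow_iff, zpow_mem_zpowers_pow_iff,
    zpow_mem_zpowers_pow_iff, Nat.gcd_eq_right ht, Nat.gcd_eq_right hl]
  simp only [Int.natCast_dvd, Nat.lcm_dvd_iff]

/-- A coset of `G ^ m` meets `G ^ t` iff the exponent of its representative is divisible by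
`gcd(m, t)`. -/
theorem coset_inter_nonempty_iff_s14 {G : Type*} [Group G] (γ : G)
    (hγ : ∀ x : G, x ∈ Subgroup.zpowers γ) (m t k : ℕ) (ht : t ∣ orderOf γ) :
    ((γ ^ k • powSet G m) ∩ powSet G t).Nonempty ↔ Nat.gcd m t ∣ k := by
  rw [powSet_eq_zpowers γ hγ, powSet_eq_zpowers γ hγ]
  have key : ∀ j : ℤ, γ ^ j ∈ (γ ^ k • (Subgroup.zpowers (γ ^ m) : Set G)) ∩
      (Subgroup.zpowers (γ ^ t) : Set G) ↔
      ((Nat.gcd (orderOf γ) m : ℕ) : ℤ) ∣ -k + j ∧ (t : ℤ) ∣ j := by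
    intro j
    rw [Set.mem_inter_iff, Set.mem_smul_set_iff_inv_smul_mem, smul_eq_mul, ← zpow_natCast γ k,
      ← zpow_neg, ← zpow_add, SetLike.mem_coe, SetLike.mem_coe, zpow_mem_zpowers_pow_iff,
      zpow_mem_zpowers_pow_iff, Nat.gcd_eq_right ht]
  have hg : Nat.gcd m t = Nat.gcd (Nat.gcd (orderOf γ) m) t := by
    rw [Nat.gcd_comm (orderOf γ) m, Nat.gcd_assoc, Nat.gcd_eq_right ht]
  constructor
  · rintro ⟨x, hx⟩
    obtain ⟨j, rfl⟩ := Subgroup.mem_zpowers_iff.1 (hγ x)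
    obtain ⟨h1, h2⟩ := (key j).1 hx
    rw [hg, ← Int.natCast_dvd_natCast]
    have h3 := (Int.natCast_dvd_natCast.2
      (Nat.gcd_dvd_left (Nat.gcd (orderOf γ) m) t)).trans h1
    have h4 := (Int.natCast_dvd_natCast.2
      (Nat.gcd_dvd_right (Nat.gcd (orderOf γ) m) t)).trans h2
    have h5 := dvd_sub h4 h3
    rwa [show j - (-(k : ℤ) + j) = k by ring] at h5
  · intro h
    rw [hg, ← Int.natCast_dvd_natCast, natCast_gcd_dvd_iff] at h
    obtain ⟨x, y, hxy⟩ := h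
    exact ⟨γ ^ ((t : ℤ) * y), (key _).2 ⟨⟨-x, by rw [hxy]; ring⟩, dvd_mul_right _ _⟩⟩

/-- A coset of `H` that meets `K` meets it in a coset of `H ⊓ K`. -/
theorem ncard_coset_inter {G : Type*} [Group G] (H K : Subgroup G) (a : G)
    (hne : ((a • (H : Set G)) ∩ (K : Set G)).Nonempty) :
    ((a • (H : Set G)) ∩ (K : Set G)).ncard = Nat.card (H ⊓ K : Subgroup G) := by
  obtain ⟨x, hxH, hxK⟩ := hne
  have hx : a • (H : Set G) = x • (H : Set G) := by
    rw [leftCoset_eq_iff]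
    exact Set.mem_smul_set_iff_inv_smul_mem.1 hxH
  have hK : (K : Set G) = x • (K : Set G) := by
    have := (leftCoset_eq_iff K (x := 1) (y := x)).2 (by simpa using hxK)
    simpa using this
  rw [hx, hK, ← Set.smul_set_inter, Set.ncard_smul_set, ← Subgroup.coe_inf,
    ← Nat.card_coe_set_eq]
  rfl

theorem card_zpowers_pow {G : Type*} [Group G] [Finite G] (γ : G) (m : ℕ) :
    Nat.card (Subgroup.zpowers (γ ^ m)) * Nat.gcd (orderOf γ) m = orderOf γ := by
  rw [Nat.card_zpowers, orderOf_pow]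
  exact Nat.div_mul_cancel (Nat.gcd_dvd_left _ _)

/-- The density of the coset `γ ^ k • G ^ m` in `G ^ t`, for any exponents `m` and `k`. -/
theorem coset_density {G : Type*} [Group G] [Finite G] (γ : G)
    (hγ : ∀ x : G, x ∈ Subgroup.zpowers γ) (m t k : ℕ) (ht : t ∣ orderOf γ) :
    (((γ ^ k • powSet G m) ∩ powSet G t).ncard : ℚ) / ((powSet G m).ncard : ℚ) =
      if Nat.gcd m t ∣ k then (Nat.gcd m t : ℚ) / (t : ℚ) else 0 := by
  have hiff := coset_inter_nonempty_iff_s14 γ hγ m t k ht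
  split_ifs with hk
  · have hne := hiff.2 hk
    rw [powSet_eq_zpowers γ hγ, powSet_eq_zpowers γ hγ] at hne ⊢
    rw [ncard_coset_inter _ _ _ hne, zpowers_pow_inf γ hγ m t ht, ← Nat.card_coe_set_eq]
    have hn : 0 < orderOf γ := orderOf_pos γ
    have h1 := card_zpowers_pow γ m
    have h2 := card_zpowers_pow γ (Nat.lcm (Nat.gcd (orderOf γ) m) t)
    rw [Nat.gcd_eq_right (Nat.lcm_dvd (Nat.gcd_dvd_left _ _) ht)] at h2
    have h3 := Nat.gcd_mul_lcm (Nat.gcd (orderOf γ) m) t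
    rw [Nat.gcd_comm (orderOf γ) m, Nat.gcd_assoc, Nat.gcd_eq_right ht,
      Nat.gcd_comm m (orderOf γ)] at h3
    have htpos : 0 < t := Nat.pos_of_dvd_of_pos ht hn
    have hgpos : 0 < Nat.gcd (orderOf γ) m := Nat.gcd_pos_of_pos_left _ hn
    have hlpos : 0 < Nat.lcm (Nat.gcd (orderOf γ) m) t := Nat.lcm_pos hgpos htpos
    have hApos : (0 : ℚ) < Nat.card (Subgroup.zpowers (γ ^ m)) := by
      exact_mod_cast Nat.card_pos
    rw [SetLike.coe_sort_coe, div_eq_div_iff hApos.ne' (by exact_mod_cast htpos.ne')]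
    generalize Nat.lcm (Nat.gcd (orderOf γ) m) t = l at *
    generalize Nat.gcd (orderOf γ) m = g at *
    norm_cast
    refine Nat.eq_of_mul_eq_mul_right (Nat.mul_pos hlpos hgpos) ?_
    calc _ = (Nat.card (Subgroup.zpowers (γ ^ l)) * l) * (g * t) := by ring
      _ = _ := by rw [h2, ← h1, ← h3]; ring
  · rw [Set.not_nonempty_iff_eq_empty.1 (fun h => hk (hiff.1 h))]
    simp

theorem eq_pow_of_orderOf_eq_two {G : Type*} [Group G] (γ u : G) (q : ℕ)
    (hγ : ∀ x : G, x ∈ Subgroup.zpowers γ) (hq : orderOf γ = 2 * q) (hu : orderOf u = 2) :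
    u = γ ^ q := by
  obtain ⟨j, rfl⟩ := Subgroup.mem_zpowers_iff.1 (hγ u)
  have h1 : ((orderOf γ : ℕ) : ℤ) ∣ 2 * j := by
    rw [orderOf_dvd_iff_zpow_eq_one, mul_comm, zpow_mul]
    have := pow_orderOf_eq_one (γ ^ j)
    rw [hu] at this
    exact_mod_cast this
  have h2 : ¬ ((orderOf γ : ℕ) : ℤ) ∣ j := by
    rw [orderOf_dvd_iff_zpow_eq_one]
    intro h
    rw [h, orderOf_one] at hu
    omega
  rw [hq] at h1 h2
  push_cast at h1 h2
  obtain ⟨c, rfl⟩ := Int.dvd_of_mul_dvd_mul_left (by norm_num) h1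
  rcases Int.even_or_odd' c with ⟨b, rfl | rfl⟩
  · exact absurd ⟨b, by ring⟩ h2
  · rw [← zpow_natCast γ q, zpow_eq_zpow_iff_modEq, Int.modEq_iff_dvd, hq]
    exact ⟨-b, by push_cast; ring⟩

/-- If `2 * k` is already a multiple of `gcd(2h, t)`, only the `2`-parts decide whether `k` is. -/
theorem gcd_dvd_iff_two_pow_dvd (h t k : ℕ) (hh : h ≠ 0) (ht : t ≠ 0)
    (hk : Nat.gcd (2 * h) t ∣ 2 * k) :
    Nat.gcd (2 * h) t ∣ k ↔ 2 ^ min (padicValNat 2 h + 1) (padicValNat 2 t) ∣ k := by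
  have hv : padicValNat 2 (Nat.gcd (2 * h) t) =
      min (padicValNat 2 h + 1) (padicValNat 2 t) := by
    rw [← Nat.factorization_def _ Nat.prime_two,
      Nat.factorization_gcd (mul_ne_zero two_ne_zero hh) ht, Finsupp.inf_apply,
      Nat.factorization_def _ Nat.prime_two, Nat.factorization_def _ Nat.prime_two,
      padicValNat.mul two_ne_zero hh, padicValNat.self one_lt_two, add_comm]
  rw [← hv]
  have hd : Nat.gcd (2 * h) t ≠ 0 := Nat.gcd_ne_zero_right ht
  generalize Nat.gcd (2 * h) t = d at *
  refine ⟨fun hdk => pow_padicValNat_dvd.trans hdk, fun h2 => ?_⟩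
  obtain ⟨a, m, hm, rfl⟩ := Nat.exists_eq_two_pow_mul_odd hd
  have ha : a ≤ padicValNat 2 (2 ^ a * m) :=
    (padicValNat_dvd_iff_le hd).1 (dvd_mul_right _ _)
  have hmk : m ∣ k :=
    (Nat.coprime_two_right.2 hm).dvd_of_dvd_mul_left ((dvd_mul_left _ _).trans hk)
  exact ((Nat.coprime_two_left.2 hm).pow_left a).mul_dvd_of_dvd_of_dvd
    ((pow_dvd_pow 2 ha).trans h2) hmk

/-- Divisibility of `q + h` by `2 ^ min(e + 1, τ)`, where `e = ord₂(h)` and `τ ≤ ord₂(q) + 1`. If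
`τ = ord₂(q) + 1`, it holds only when `e = ord₂(q)`, the carry then raising the valuation of the
sum. If `τ ≤ ord₂(q)`, the power of `2` divides `q`, and `h` decides. -/
theorem two_pow_dvd_add_iff (q h τ : ℕ) (hq : q ≠ 0) (hh : h ≠ 0)
    (hτ : τ ≤ padicValNat 2 q + 1) :
    2 ^ min (padicValNat 2 h + 1) τ ∣ q + h ↔
      (τ = padicValNat 2 q + 1 ∧ τ = padicValNat 2 h + 1) ∨
        (τ ≤ padicValNat 2 q ∧ τ ≤ padicValNat 2 h) := by
  have hQ : ∀ b, 2 ^ b ∣ q ↔ b ≤ padicValNat 2 q := fun b => padicValNat_dvd_iff_le hq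
  have hH : ∀ b, 2 ^ b ∣ h ↔ b ≤ padicValNat 2 h := fun b => padicValNat_dvd_iff_le hh
  by_cases h1 : min (padicValNat 2 h + 1) τ ≤ padicValNat 2 q
  · rw [Nat.dvd_add_right ((hQ _).2 h1), hH]
    omega
  by_cases h2 : min (padicValNat 2 h + 1) τ ≤ padicValNat 2 h
  · rw [Nat.dvd_add_left ((hH _).2 h2), hQ]
    omega
  have he : padicValNat 2 h = padicValNat 2 q := by omega
  refine iff_of_true ?_ (by omega)
  obtain ⟨a, q', hq', rfl⟩ := Nat.exists_eq_two_pow_mul_odd hq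
  obtain ⟨b, h', hh', rfl⟩ := Nat.exists_eq_two_pow_mul_odd hh
  have hval : ∀ c m : ℕ, Odd m → padicValNat 2 (2 ^ c * m) = c := by
    intro c m hm
    rw [padicValNat.mul (by positivity) hm.pos.ne', padicValNat.prime_pow,
      padicValNat.eq_zero_of_not_dvd hm.not_two_dvd_nat, add_zero]
  rw [hval _ _ hq', hval _ _ hh'] at he
  rw [hval _ _ hh']
  subst he
  refine (pow_dvd_pow 2 (min_le_left _ _)).trans ?_
  rw [← mul_add, pow_succ]
  exact mul_dvd_mul_left _ (hq'.add_odd hh').two_dvd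

/-- the densities of `(-1)·G^{2h}` and `(-1)·γ^h·G^{2h}` in `G^t`,
where `G` is cyclic of even order `n` with generator `γ` and `-1` is the unique
element of order `2`. -/
theorem stmt14 {G : Type*} [Group G] [IsCyclic G] [Fintype G] (n t h : ℕ)
    (hn : Fintype.card G = n) (hneven : 2 ∣ n) (u : G) (hu : orderOf u = 2)
    (γ : G) (hγ : ∀ x : G, x ∈ Subgroup.zpowers γ) (ht : t ∣ n) (hh : 1 ≤ h) :
    ((((u • powSet G (2 * h)) ∩ powSet G t).ncard : ℚ) / ((powSet G (2 * h)).ncard : ℚ) =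
      if padicValNat 2 n = padicValNat 2 t ∧ padicValNat 2 t ≤ padicValNat 2 h + 1 then 0
      else (Nat.gcd (2 * h) t : ℚ) / (t : ℚ)) ∧
    (((((u * γ ^ h) • powSet G (2 * h)) ∩ powSet G t).ncard : ℚ) /
        (((γ ^ h) • powSet G (2 * h)).ncard : ℚ) =
      if (padicValNat 2 n = padicValNat 2 t ∧ padicValNat 2 t ≠ padicValNat 2 h + 1) ∨
          (padicValNat 2 t + 1 ≤ padicValNat 2 n ∧ padicValNat 2 h + 1 ≤ padicValNat 2 t)
        then 0 else (Nat.gcd (2 * h) t : ℚ) / (t : ℚ)) := by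
  have ho : orderOf γ = n := by
    rw [← hn, ← Nat.card_eq_fintype_card]
    exact orderOf_eq_card_of_forall_mem_zpowers hγ
  obtain ⟨q, rfl⟩ := hneven
  have hn0 : 0 < 2 * q := ho ▸ orderOf_pos γ
  have hq0 : q ≠ 0 := by omega
  have ht0 : t ≠ 0 := (Nat.pos_of_dvd_of_pos ht hn0).ne'
  have hto : t ∣ orderOf γ := ho ▸ ht
  have hval : padicValNat 2 (2 * q) = padicValNat 2 q + 1 := by
    rw [padicValNat.mul two_ne_zero hq0, padicValNat.self one_lt_two, add_comm]
  have hle : padicValNat 2 t ≤ padicValNat 2 (2 * q) :=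
    (padicValNat_dvd_iff_le hn0.ne').1 (pow_padicValNat_dvd.trans ht)
  have hdq : Nat.gcd (2 * h) t ∣ 2 * q := (Nat.gcd_dvd_right _ _).trans ht
  have hdh : Nat.gcd (2 * h) t ∣ 2 * (q + h) := by
    rw [mul_add]
    exact dvd_add hdq (Nat.gcd_dvd_left _ _)
  rw [eq_pow_of_orderOf_eq_two γ u q hγ ho hu, ← pow_add, Set.ncard_smul_set,
    coset_density γ hγ _ _ _ hto, coset_density γ hγ _ _ _ hto]
  simp only [gcd_dvd_iff_two_pow_dvd h t q (by omega) ht0 hdq,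
    gcd_dvd_iff_two_pow_dvd h t (q + h) (by omega) ht0 hdh,
    two_pow_dvd_add_iff q h _ hq0 (by omega) (hval ▸ hle),
    padicValNat_dvd_iff_le hq0, hval]
  rw [hval] at hle
  constructor <;> split_ifs <;> first | rfl | omega
end

section
/- Let G be a finite cyclic group of order n, let t be a divisor of n and h a positive integer, and set h_t := h/gcd(h,t). Then Σ_{d | n/t} μ(d) · |G^h ∩ G^{dt}| / |G^h| = gcd(h,t)·φ(n/t)/n if gcd(n/t, h_t) = 1, and 0 otherwise, where G^m := {x^m : x ∈ G}, μ is the Möbius function and φ is Euler's totient function. -/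
/-!
Write `A = n / gcd(n, h)` and `m = n / t`. In a cyclic group of order `n` the set `G^k` is the
set of solutions of `x ^ (n / gcd(n, k)) = 1`, so for `d ∣ m` the set `G^h ∩ G^{dt}` consists of
the solutions of `x ^ gcd(A, n / (dt)) = 1`, and these number `gcd(A, n / (dt))`. Multiplying by
`dt` turns this into `gcd(A, n / (dt)) * dt = A * gcd(h, dt)`, and
`gcd(h, dt) = gcd(h, t) * gcd(h_t, d)` because `h_t` is coprime to `t / gcd(h, t)`. The sum is
therefore `gcd(h, t) / t` times `∑_{d ∣ m} μ(d) gcd(h_t, d) / d`, which by multiplicativity is the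
Euler product `∏_{p ∣ m} (1 - gcd(h_t, p) / p)`. A prime `p ∣ m` dividing `h_t` makes a factor
vanish; if there is none, the product is `φ(m) / m`.
-/

open Polynomial Filter
open scoped Classical Pointwise

/-- In a cyclic group of order `n` the `m`-th powers are exactly the solutions of
`x ^ (n / gcd(n, m)) = 1`: one inclusion is clear, and both sets have `n / gcd(n, m)` elements. -/
theorem powSet_eq_setOf_pow_eq_one {G : Type*} [CommGroup G] [IsCyclic G] [Finite G] (m : ℕ) :
    powSet G m = {x : G | x ^ (Nat.card G / (Nat.card G).gcd m) = 1} := by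
  have hdvd : Nat.card G / (Nat.card G).gcd m ∣ Nat.card G :=
    Nat.div_dvd_of_dvd (Nat.gcd_dvd_left _ _)
  refine Set.eq_of_subset_of_ncard_le ?_ ?_ (Set.toFinite _)
  · rintro _ ⟨x, rfl⟩
    change (x ^ m) ^ (Nat.card G / (Nat.card G).gcd m) = 1
    obtain ⟨c, hc⟩ := Nat.gcd_dvd_right (Nat.card G) m
    have : m * (Nat.card G / (Nat.card G).gcd m) = Nat.card G * c := by
      conv_lhs => lhs; rw [hc]
      rw [mul_right_comm, Nat.mul_div_cancel' (Nat.gcd_dvd_left _ _)]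
    rw [← pow_mul, this, pow_mul, pow_card_eq_one', one_pow]
  · have h1 := IsCyclic.card_powMonoidHom_range (G := G) m
    have h2 := IsCyclic.card_powMonoidHom_ker (G := G) (Nat.card G / (Nat.card G).gcd m)
    rw [Nat.gcd_eq_right hdvd] at h2
    exact (h2.trans h1.symm).le

theorem ncard_pow_eq_one {G : Type*} [CommGroup G] [IsCyclic G] [Finite G] {k : ℕ}
    (hk : k ∣ Nat.card G) : {x : G | x ^ k = 1}.ncard = k :=
  (IsCyclic.card_powMonoidHom_ker (G := G) k).trans (Nat.gcd_eq_right hk)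

/-- Since `h / gcd(h, t)` is coprime to `t / gcd(h, t)`, only `d` contributes further
common factors. -/
theorem gcd_mul_eq_gcd_mul_gcd {h : ℕ} (t d : ℕ) (hh : 1 ≤ h) :
    h.gcd (d * t) = h.gcd t * (h / h.gcd t).gcd d := by
  have hg : 0 < h.gcd t := Nat.gcd_pos_of_pos_left _ hh
  have hc := Nat.coprime_div_gcd_div_gcd hg
  obtain ⟨a, ha⟩ := Nat.gcd_dvd_left h t
  obtain ⟨b, hb⟩ := Nat.gcd_dvd_right h t
  set g := h.gcd t
  have hha : h / g = a := by rw [ha, Nat.mul_div_cancel_left _ hg]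
  have htb : t / g = b := by rw [hb, Nat.mul_div_cancel_left _ hg]
  rw [hha, htb] at hc
  rw [hha]
  conv_lhs => rw [ha, hb, mul_left_comm, Nat.gcd_mul_left]
  rw [hc.symm.gcd_mul_right_cancel_right]

/-- The density of `G^{dt}` in `G^h`. -/
theorem density_eq {G : Type*} [CommGroup G] [IsCyclic G] [Finite G] {t h d : ℕ}
    (hd : d * t ∣ Nat.card G) (hh : 1 ≤ h) :
    ((powSet G h ∩ powSet G (d * t)).ncard : ℚ) / ((powSet G h).ncard : ℚ) =
      (h.gcd t : ℚ) / t * (((h / h.gcd t).gcd d : ℚ) / d) := by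
  have hn : 0 < Nat.card G := Nat.card_pos
  have hdt : 0 < d * t := Nat.pos_of_dvd_of_pos hd hn
  rw [powSet_eq_setOf_pow_eq_one, powSet_eq_setOf_pow_eq_one, Nat.gcd_eq_right hd]
  set n := Nat.card G with hn'
  set A := n / n.gcd h with hA
  have hAn : A * n.gcd h = n := Nat.div_mul_cancel (Nat.gcd_dvd_left _ _)
  have hA0 : 0 < A := Nat.pos_of_mul_pos_right (hAn ▸ hn)
  have hBn : n / (d * t) * (d * t) = n := Nat.div_mul_cancel hd
  have hset : {x : G | x ^ A = 1} ∩ {x : G | x ^ (n / (d * t)) = 1} =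
      {x : G | x ^ A.gcd (n / (d * t)) = 1} := by
    ext x
    simp [← orderOf_dvd_iff_pow_eq_one, Nat.dvd_gcd_iff]
  have hAdvd : A ∣ n := ⟨_, hAn.symm⟩
  rw [hset, ncard_pow_eq_one hAdvd, ncard_pow_eq_one ((Nat.gcd_dvd_left _ _).trans hAdvd)]
  have key : A.gcd (n / (d * t)) * (d * t) = A * (h.gcd t * (h / h.gcd t).gcd d) := by
    rw [← gcd_mul_eq_gcd_mul_gcd t d hh, ← Nat.gcd_mul_right, hBn]
    calc (A * (d * t)).gcd n = (A * (d * t)).gcd (A * n.gcd h) := by rw [hAn]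
      _ = A * h.gcd (d * t) := by
        rw [Nat.gcd_mul_left, ← Nat.gcd_assoc, Nat.gcd_eq_left hd, Nat.gcd_comm]
  have key' : (A.gcd (n / (d * t)) : ℚ) * (d * t) = A * (h.gcd t * (h / h.gcd t).gcd d) := by
    exact_mod_cast key
  have hA' : (A : ℚ) ≠ 0 := by positivity
  have hd0 : (d : ℚ) ≠ 0 := by
    exact_mod_cast (Nat.pos_of_mul_pos_right hdt).ne'
  have ht0 : (t : ℚ) ≠ 0 := by
    exact_mod_cast (Nat.pos_of_mul_pos_left hdt).ne'
  rw [div_mul_div_comm, div_eq_div_iff hA' (mul_ne_zero ht0 hd0)]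
  linear_combination key'

/-- The multiplicative function `d ↦ gcd(k, d) / d`. -/
def gcdRatio (k : ℕ) : ArithmeticFunction ℚ :=
  ⟨fun d => (k.gcd d : ℚ) / d, by simp⟩

theorem gcdRatio_apply (k d : ℕ) : gcdRatio k d = (k.gcd d : ℚ) / d := rfl

theorem isMultiplicative_gcdRatio (k : ℕ) : (gcdRatio k).IsMultiplicative := by
  refine ⟨by simp [gcdRatio_apply], fun {a b} hab => ?_⟩
  rw [gcdRatio_apply, gcdRatio_apply, gcdRatio_apply, hab.gcd_mul]
  push_cast
  rw [div_mul_div_comm]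

/-- Only squarefree `d` contribute, so the sum may be taken over the divisors of the radical
of `m`. -/
theorem sum_moebius_mul_eq_prod (f : ArithmeticFunction ℚ) (hf : f.IsMultiplicative) {m : ℕ}
    (hm : m ≠ 0) :
    ∑ d ∈ m.divisors, (ArithmeticFunction.moebius d : ℚ) * f d =
      ∏ p ∈ m.primeFactors, (1 - f p) := by
  have hprime : ∀ p ∈ m.primeFactors, p.Prime := fun p hp => Nat.prime_of_mem_primeFactors hp
  have hpf : (∏ p ∈ m.primeFactors, p).primeFactors = m.primeFactors :=
    Nat.primeFactors_prod hprime
  have hsq : Squarefree (∏ p ∈ m.primeFactors, p) := by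
    refine Finset.squarefree_prod_of_pairwise_isCoprime ?_ fun p hp => (hprime p hp).squarefree
    intro p hp q hq hpq
    exact Nat.coprime_iff_isRelPrime.1 ((Nat.coprime_primes (hprime p hp) (hprime q hq)).2 hpq)
  rw [← hpf, hf.prodPrimeFactors_one_sub_of_squarefree f hsq]
  symm
  refine Finset.sum_subset (Nat.divisors_subset_of_dvd hm (Nat.prod_primeFactors_dvd m)) ?_
  intro d hd hd'
  rw [ArithmeticFunction.moebius_eq_zero_of_not_squarefree, Int.cast_zero, zero_mul]
  intro hds
  refine hd' (Nat.mem_divisors.2 ⟨?_, hsq.ne_zero⟩)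
  rw [← Nat.prod_primeFactors_of_squarefree hds]
  exact Finset.prod_dvd_prod_of_subset _ _ _
    (Nat.primeFactors_mono (Nat.dvd_of_mem_divisors hd) hm)

theorem sum_moebius_mul_gcd_div {m : ℕ} (k : ℕ) (hm : m ≠ 0) :
    ∑ d ∈ m.divisors, (ArithmeticFunction.moebius d : ℚ) * ((k.gcd d : ℚ) / d) =
      if m.gcd k = 1 then (m.totient : ℚ) / m else 0 := by
  have hm' : (m : ℚ) ≠ 0 := by exact_mod_cast hm
  refine (sum_moebius_mul_eq_prod _ (isMultiplicative_gcdRatio k) hm).trans ?_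
  split_ifs with hk
  · rw [Nat.totient_eq_mul_prod_factors, mul_div_cancel_left₀ _ hm']
    refine Finset.prod_congr rfl fun p hp => ?_
    have : k.gcd p = 1 :=
      (Nat.Coprime.coprime_dvd_left (Nat.dvd_of_mem_primeFactors hp) hk).symm
    rw [gcdRatio_apply, this, Nat.cast_one, one_div]
  · obtain ⟨p, hp, hpm, hpk⟩ := Nat.Prime.not_coprime_iff_dvd.1 hk
    refine Finset.prod_eq_zero (Nat.mem_primeFactors.2 ⟨hp, hpm, hm⟩) ?_
    have hp0 : (p : ℚ) ≠ 0 := by exact_mod_cast hp.ne_zero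
    rw [gcdRatio_apply, Nat.gcd_eq_right hpk, div_self hp0, sub_self]

/-- the inclusion–exclusion sum of the densities `|G^h ∩ G^{dt}|/|G^h|`. -/
theorem stmt15 {G : Type*} [Group G] [IsCyclic G] [Fintype G] (n t h : ℕ)
    (hn : Fintype.card G = n) (ht : t ∣ n) (hh : 1 ≤ h) :
    ∑ d ∈ (n / t).divisors, (ArithmeticFunction.moebius d : ℚ) *
        ((powSet G h ∩ powSet G (d * t)).ncard : ℚ) / ((powSet G h).ncard : ℚ) =
      if Nat.gcd (n / t) (h / Nat.gcd h t) = 1 then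
        (Nat.gcd h t : ℚ) * (Nat.totient (n / t) : ℚ) / (n : ℚ)
      else 0 := by
  let : CommGroup G := IsCyclic.commGroup
  have hcard : Nat.card G = n := by rw [Nat.card_eq_fintype_card, hn]
  have hn0 : 0 < n := hcard ▸ Nat.card_pos
  obtain ⟨m, rfl⟩ := ht
  have ht0 : 0 < t := Nat.pos_of_mul_pos_right hn0
  have hm0 : 0 < m := Nat.pos_of_mul_pos_left hn0
  rw [Nat.mul_div_cancel_left _ ht0]
  have hterm : ∀ d ∈ m.divisors, (ArithmeticFunction.moebius d : ℚ) *
        ((powSet G h ∩ powSet G (d * t)).ncard : ℚ) / ((powSet G h).ncard : ℚ) =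
      (h.gcd t : ℚ) / t *
        ((ArithmeticFunction.moebius d : ℚ) * (((h / h.gcd t).gcd d : ℚ) / d)) := by
    intro d hd
    have hdvd : d * t ∣ Nat.card G := by
      rw [hcard, mul_comm t m]
      exact Nat.mul_dvd_mul_right (Nat.dvd_of_mem_divisors hd) t
    rw [mul_div_assoc, density_eq hdvd hh, mul_left_comm]
  rw [Finset.sum_congr rfl hterm, ← Finset.mul_sum, sum_moebius_mul_gcd_div _ hm0.ne']
  split_ifs
  · push_cast
    rw [div_mul_div_comm]
  · rw [mul_zero]
end

section
/- Let p be an odd prime with ord_p(g) = 0, p ∤ d(g₀) and p ≡ 1 (mod t). Then Σ_{d | (p−1)/t} μ(d) · r_{g,dt}(p) · gcd(h,dt)/(dt) = w_{g,t}(p) · gcd(h,t) · φ((p−1)/t)/(p−1), where μ is the Möbius function and φ Euler's totient function. -/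
/-!
Write `n = p - 1`, `G = (ℤ/pℤ)^* = ⟨γ⟩` and `D = gcd(2h, n)`. The factor `gcd(h, dt)/(dt)` cancels
the factor `(dt)_h` of `r_{g,dt}(p)`, so the left side is `∑ μ(d) ρ_{dt}`. The coset defining `ρ`
is `γ^α G^{2h}` with `α ∈ {0, h, n/2, n/2 + h}` (as `-1 = γ^{n/2}`), so in terms of exponents
`ρ_{dt}` counts the `k < n` with `k ≡ α (mod D)` and `dt ∣ k`, divided by `n / D` (`rhoDen_eq`).
Möbius inversion (`moebius_sum_eq`) leaves the `k ≡ α (mod D)` with `gcd(n, k) = t`.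

The key point is that `D ∣ 2α`. There are `φ(n/t)` exponents with `gcd(n, k) = t`, and since
`2α ≡ 0` modulo `D`, the congruence `k ≡ α` holds for all of them or for none, according to
whether `gcd(α, D) = gcd(t, D)` (`card_gcd_class`). It remains to check that
`w_{g,t}(p) gcd(h, t)` equals `D` when this condition holds and `0` otherwise (`wgt_mul_gcd`).
At odd primes both sides ask that the odd part of `gcd(h, n)` divide `t`, and the rest is a
case distinction on the `2`-adic valuations of `h`, `t` and `n` (`two_adic_weight`).
-/

open Polynomial Filter
open scoped Classical Pointwise

/-! ### Power sets in a finite cyclic group -/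

lemma zpow_mem_powSet {G : Type*} [CommGroup G] {γ : G} {n : ℕ} (hn : orderOf γ = n)
    (hγ : ∀ x : G, x ∈ Subgroup.zpowers γ) (M : ℕ) (z : ℤ) :
    γ ^ z ∈ powSet G M ↔ ((Nat.gcd M n : ℕ) : ℤ) ∣ z := by
  constructor
  · rintro ⟨x, hx⟩
    obtain ⟨j, rfl⟩ := hγ x
    have h1 : γ ^ (j * (M : ℤ)) = γ ^ z := by
      rw [zpow_mul, zpow_natCast]; exact hx
    rw [zpow_eq_zpow_iff_modEq, hn] at h1
    have h2 : ((Nat.gcd M n : ℕ) : ℤ) ∣ z - j * M :=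
      (Int.natCast_dvd_natCast.2 (Nat.gcd_dvd_right M n)).trans h1.dvd
    have h3 : ((Nat.gcd M n : ℕ) : ℤ) ∣ j * M :=
      (Int.natCast_dvd_natCast.2 (Nat.gcd_dvd_left M n)).mul_left j
    simpa using dvd_add h2 h3
  · rintro ⟨c, rfl⟩
    refine ⟨γ ^ (Nat.gcdA M n * c), ?_⟩
    change (γ ^ (Nat.gcdA M n * c)) ^ M = _
    rw [← zpow_natCast, ← zpow_mul, zpow_eq_zpow_iff_modEq, hn, Nat.gcd_eq_gcd_ab,
      Int.modEq_iff_dvd]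
    exact ⟨Nat.gcdB M n * c, by ring⟩

/-- Subsets of the cyclic group `⟨γ⟩` are counted through exponents in `{0, …, n - 1}`. -/
lemma ncard_eq_card_exponents {G : Type*} [Group G] [Finite G] {γ : G} {n : ℕ}
    (hn : orderOf γ = n)
    (hγ : ∀ x : G, x ∈ Subgroup.zpowers γ) (S : Set G) :
    S.ncard = ((Finset.range n).filter fun k => γ ^ k ∈ S).card := by
  have hS : S = (fun k : ℕ => γ ^ k) '' ((Finset.range n).filter fun k => γ ^ k ∈ S : Finset ℕ) := by
    ext x
    constructor
    · intro hx
      obtain ⟨k, hk, rfl⟩ :=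
        (mem_zpowers_iff_mem_range_orderOf (x := γ)).1 (hγ x) |> Finset.mem_image.1
      refine ⟨k, ?_, rfl⟩
      simp only [Finset.coe_filter, Set.mem_ofPred_eq]
      exact ⟨hn ▸ hk, hx⟩
    · rintro ⟨k, hk, rfl⟩
      simp only [Finset.coe_filter, Set.mem_ofPred_eq] at hk
      exact hk.2
  conv_lhs => rw [hS]
  rw [Set.InjOn.ncard_image, Set.ncard_coe_finset]
  intro a ha b hb hab
  simp only [Finset.coe_filter, Set.mem_ofPred_eq, Finset.mem_range] at ha hb
  exact pow_injOn_Iio_orderOf (by simpa [hn] using ha.1) (by simpa [hn] using hb.1) hab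

lemma card_multiples_range {n D : ℕ} (hD : D ∣ n) (hn : 0 < n) :
    D * ((Finset.range n).filter fun k => D ∣ k).card = n := by
  obtain ⟨c, rfl⟩ := hD
  have hD0 : 0 < D := Nat.pos_of_mul_pos_right hn
  have : ((Finset.range (D * c)).filter fun k => D ∣ k) = (Finset.range c).image (D * ·) := by
    ext k
    simp only [Finset.mem_filter, Finset.mem_range, Finset.mem_image]
    constructor
    · rintro ⟨hk, j, rfl⟩
      exact ⟨j, Nat.lt_of_mul_lt_mul_left hk, rfl⟩
    · rintro ⟨j, hj, rfl⟩
      exact ⟨Nat.mul_lt_mul_of_pos_left hj hD0, dvd_mul_right _ _⟩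
  rw [this, Finset.card_image_of_injective _ (fun a b hab => Nat.eq_of_mul_eq_mul_left hD0 hab), Finset.card_range]

/-- The density `ρ` of a coset `γ^α · G^{2h}` as a count of exponents: `γ^k` lies in the coset
exactly when `k ≡ α` modulo `gcd(2h, n)`, and `|G^{2h}| = n / gcd(2h, n)`. -/
lemma rhoDen_eq {G : Type*} [CommGroup G] [Finite G] {γ : G} {n : ℕ} (hn : orderOf γ = n)
    (hγ : ∀ x : G, x ∈ Subgroup.zpowers γ) (α h m : ℕ) (hm : m ∣ n) :
    rhoDen G n (γ ^ α) h m =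
      (((Finset.range n).filter fun k => k ≡ α [MOD Nat.gcd (2 * h) n] ∧ m ∣ k).card : ℚ) *
        (Nat.gcd (2 * h) n : ℚ) / n := by
  have hn0 : 0 < n := hn ▸ orderOf_pos γ
  have key : ∀ k : ℕ, γ ^ k ∈ γ ^ α • powSet G (2 * h) ↔ k ≡ α [MOD Nat.gcd (2 * h) n] := by
    intro k
    rw [Set.mem_smul_set_iff_inv_smul_mem, smul_eq_mul,
      show (γ ^ α)⁻¹ * γ ^ k = γ ^ ((k : ℤ) - α) by
        rw [zpow_sub, zpow_natCast, zpow_natCast, mul_comm],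
      zpow_mem_powSet hn hγ, Nat.ModEq.comm, Nat.modEq_iff_dvd]
  have key2 : ∀ k M : ℕ, γ ^ k ∈ powSet G M ↔ Nat.gcd M n ∣ k := by
    intro k M
    rw [← zpow_natCast, zpow_mem_powSet hn hγ, Int.natCast_dvd_natCast]
  rw [rhoDen, if_pos hm, ncard_eq_card_exponents hn hγ, ncard_eq_card_exponents hn hγ]
  simp only [Set.mem_inter_iff, key, key2, Nat.gcd_eq_left hm]
  have h1 := card_multiples_range (Nat.gcd_dvd_right (2 * h) n) hn0
  generalize hc : (Finset.card (Finset.filter (fun k => Nat.gcd (2 * h) n ∣ k) (Finset.range n))) = c at *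
  generalize (2 * h).gcd n = D at *
  subst h1
  have : D ≠ 0 := by rintro rfl; simp at hn0
  have : c ≠ 0 := by rintro rfl; simp at hn0
  push_cast
  field_simp

/-- Möbius inversion: summing `μ(d)` over `d ∣ n/t` with `dt ∣ k` detects `gcd(n, k) = t`. -/
lemma moebius_sum_eq {n t : ℕ} (hn : 0 < n) (ht : t ∣ n) (Q : ℕ → Prop)
    [DecidablePred Q] :
    ∑ d ∈ (n / t).divisors, (ArithmeticFunction.moebius d : ℚ) *
        (((Finset.range n).filter fun k => Q k ∧ d * t ∣ k).card : ℚ) =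
      (((Finset.range n).filter fun k => Q k ∧ n.gcd k = t).card : ℚ) := by
  obtain ⟨m, rfl⟩ := ht
  have ht0 : 0 < t := Nat.pos_of_mul_pos_right hn
  have hm0 : 0 < m := Nat.pos_of_mul_pos_left hn
  rw [Nat.mul_div_cancel_left _ ht0]
  simp only [Finset.card_filter, Nat.cast_sum, Finset.mul_sum]
  rw [Finset.sum_comm]
  refine Finset.sum_congr rfl fun k _ => ?_
  by_cases hQ : Q k
  · by_cases htk : t ∣ k
    · obtain ⟨j, rfl⟩ := htk
      have hj : ∀ d, d * t ∣ t * j ↔ d ∣ j := fun d => by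
        rw [mul_comm d, Nat.mul_dvd_mul_iff_left ht0]
      have hg : (t * m).gcd (t * j) = t ↔ m.gcd j = 1 := by
        rw [Nat.gcd_mul_left]
        exact ⟨fun h => Nat.eq_of_mul_eq_mul_left ht0 (by simpa using h), fun h => by simp [h]⟩
      simp only [hQ, hj, hg, true_and]
      have hs := congrArg (fun f => f (m.gcd j)) ArithmeticFunction.moebius_mul_coe_zeta
      simp only [ArithmeticFunction.coe_mul_zeta_apply,
        ArithmeticFunction.one_apply] at hs
      have hs' : ∑ d ∈ (m.gcd j).divisors, (ArithmeticFunction.moebius d : ℚ) =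
          if m.gcd j = 1 then 1 else 0 := by exact_mod_cast hs
      have hf : (m.gcd j).divisors = m.divisors.filter (fun d => d ∣ j) := by
        ext d
        simp only [Nat.mem_divisors, Finset.mem_filter, Nat.dvd_gcd_iff, ne_eq,
          Nat.gcd_eq_zero_iff]
        constructor <;> intro h <;> refine ⟨?_, ?_⟩ <;> first | tauto | omega
      rw [hf, Finset.sum_filter] at hs'
      push_cast
      rw [← hs']
      exact Finset.sum_congr rfl fun d _ => by split_ifs <;> simp
    · have h1 : ∀ d, ¬ d * t ∣ k := fun d hd => htk ((dvd_mul_left t d).trans hd)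
      have h2 : ¬ (t * m).gcd k = t := fun h => htk (h ▸ Nat.gcd_dvd_right _ _)
      simp [h1, h2]
  · simp [hQ]

/-! ### Counting a residue class with prescribed gcd -/

/-- If `D ∣ 2a` and `D ∣ 2b`, then `a` and `b` lie in `{0, D/2}` modulo `D`, a group of order
at most `2`. -/
lemma dvd_add_iff_of_dvd_two_mul {D a b : ℕ} (ha : D ∣ 2 * a) (hb : D ∣ 2 * b) :
    D ∣ a + b ↔ (D ∣ a ↔ D ∣ b) := by
  obtain ⟨x, hx⟩ := ha
  obtain ⟨y, hy⟩ := hb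
  by_cases h1 : D ∣ a
  · simp [h1, Nat.dvd_add_right h1]
  by_cases h2 : D ∣ b
  · simp [h1, h2, Nat.dvd_add_left h2]
  have odd_of : ∀ {c u : ℕ}, 2 * c = D * u → ¬ D ∣ c → u % 2 = 1 := by
    intro c u hu hc
    rcases Nat.mod_two_eq_zero_or_one u with h | h
    · refine absurd ⟨u / 2, ?_⟩ hc
      have : u = 2 * (u / 2) := by omega
      rw [this] at hu
      linarith
    · exact h
  have hx2 := odd_of hx h1
  have hy2 := odd_of hy h2
  simp only [h1, h2, iff_self, iff_true]
  refine ⟨(x + y) / 2, ?_⟩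
  have h3 : x + y = 2 * ((x + y) / 2) := by omega
  have : 2 * (a + b) = 2 * (D * ((x + y) / 2)) := by
    rw [mul_left_comm, ← h3]; linarith
  linarith

/-- When `D ∣ 2α`, the class of `α` modulo `D` contains either all exponents `k` with
`gcd(n, k) = t` or none: such `k` satisfy `gcd(k, D) = gcd(t, D)`, and a class killed by `2` is
determined by its gcd with `D`, which is `D` or `D/2`. The condition on the right says
`gcd(α, D) = gcd(t, D)`. -/
lemma card_gcd_class {n t D α : ℕ} (ht : t ∣ n) (hD : D ∣ n) (hα : D ∣ 2 * α) :
    ((Finset.range n).filter fun k => k ≡ α [MOD D] ∧ n.gcd k = t).card =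
      if D ∣ 2 * t ∧ (D ∣ α ↔ D ∣ t) then Nat.totient (n / t) else 0 := by
  have key : ∀ k, n.gcd k = t → (k ≡ α [MOD D] ↔ D ∣ 2 * t ∧ (D ∣ α ↔ D ∣ t)) := by
    rintro k rfl
    have e1 : D ∣ n.gcd k ↔ D ∣ k := by rw [Nat.dvd_gcd_iff]; tauto
    have e2 : D ∣ 2 * n.gcd k ↔ D ∣ 2 * k := by
      rw [← Nat.gcd_mul_left, Nat.dvd_gcd_iff]
      exact ⟨fun h => h.2, fun h => ⟨hD.mul_left 2, h⟩⟩
    rw [e1, e2]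
    constructor
    · intro h
      exact ⟨(Nat.ModEq.dvd_iff (h.mul_left 2) dvd_rfl).2 hα, (Nat.ModEq.dvd_iff h dvd_rfl).symm⟩
    · rintro ⟨h1, h2⟩
      -- modulo `D`, `k + α` and `k - α` agree because `D ∣ 2α`
      have h3 := (dvd_add_iff_of_dvd_two_mul h1 hα).2 h2.symm
      rw [Nat.modEq_iff_dvd, show (α : ℤ) - k = ((2 * α : ℕ) : ℤ) - ((k + α : ℕ) : ℤ) by
        push_cast; ring]
      exact dvd_sub (Int.natCast_dvd_natCast.2 hα) (Int.natCast_dvd_natCast.2 h3)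
  rw [Nat.totient_div_of_dvd ht]
  split_ifs with hc
  · congr 1
    ext k
    simp only [Finset.mem_filter, Finset.mem_range]
    constructor
    · rintro ⟨a, b, c⟩; exact ⟨a, c⟩
    · rintro ⟨a, c⟩; exact ⟨a, (key k c).2 hc, c⟩
  · rw [Finset.card_eq_zero, Finset.filter_eq_empty_iff]
    rintro k _ ⟨h1, h2⟩
    exact hc ((key k h2).1 h1)

/-! ### Separating the prime `2` -/

lemma gcd_two_pow_mul {x y : ℕ} (hx : Odd x) (hy : Odd y) (a b : ℕ) :
    Nat.gcd (2 ^ a * x) (2 ^ b * y) = 2 ^ min a b * Nat.gcd x y := by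
  have h2x : ∀ c, Nat.Coprime (2 ^ c) x := fun c => (Nat.coprime_two_left.2 hx).pow_left c
  have h2y : ∀ c, Nat.Coprime (2 ^ c) y := fun c => (Nat.coprime_two_left.2 hy).pow_left c
  rw [Nat.Coprime.gcd_mul _ (h2y b), Nat.Coprime.gcd_mul_right_cancel _ (h2x b).symm,
    Nat.Coprime.gcd_mul_left_cancel _ (h2y a)]
  congr 1
  rcases le_total a b with h | h
  · rw [min_eq_left h, Nat.gcd_eq_left (pow_dvd_pow 2 h)]
  · rw [min_eq_right h, Nat.gcd_eq_right (pow_dvd_pow 2 h)]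

lemma two_pow_mul_dvd_iff {x y : ℕ} (hx : Odd x) (hy : Odd y) (a b : ℕ) :
    2 ^ a * x ∣ 2 ^ b * y ↔ a ≤ b ∧ x ∣ y := by
  constructor
  · intro h
    have h2y : Nat.Coprime (2 ^ a) y := (Nat.coprime_two_left.2 hy).pow_left a
    have h2x : Nat.Coprime x (2 ^ b) := ((Nat.coprime_two_left.2 hx).pow_left b).symm
    exact ⟨Nat.pow_dvd_pow_iff_le_right'.1
      (h2y.dvd_of_dvd_mul_right ((dvd_mul_right _ _).trans h)),
      h2x.dvd_of_dvd_mul_left ((dvd_mul_left _ _).trans h)⟩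
  · rintro ⟨h1, h2⟩
    exact mul_dvd_mul (pow_dvd_pow 2 h1) h2

lemma odd_gcd {x y : ℕ} (hx : Odd x) : Odd (Nat.gcd x y) :=
  hx.of_dvd_nat (Nat.gcd_dvd_left x y)

lemma two_pow_mul_div {a b x y : ℕ} (h1 : b ≤ a) (h2 : y ∣ x) :
    2 ^ a * x / (2 ^ b * y) = 2 ^ (a - b) * (x / y) := by
  rw [Nat.mul_div_mul_comm (pow_dvd_pow 2 h1) h2, Nat.pow_div h1 two_pos]

/-- At every prime, `gcd(z/y, x/gcd(x,y)) = 1` and `gcd(x,z) ∣ y` both say that the valuation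
of `y` reaches that of `z` or that of `x`. -/
lemma coprime_quotients_iff {x y z : ℕ} (hyz : y ∣ z) (hy : 0 < y) :
    Nat.gcd (z / y) (x / Nat.gcd x y) = 1 ↔ Nat.gcd x z ∣ y := by
  obtain ⟨w, rfl⟩ := hyz
  have hg : 0 < Nat.gcd x y := Nat.gcd_pos_of_pos_right x hy
  obtain ⟨g, a, b, hg', hab, rfl, rfl⟩ := Nat.exists_coprime' hg
  have hg0 : 0 < g := hg'
  have hb : Nat.gcd (a * g) (b * g) = g := by
    rw [Nat.gcd_mul_right, Nat.Coprime.gcd_eq_one hab, one_mul]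
  rw [hb, Nat.mul_div_cancel_left _ hy, Nat.mul_div_cancel _ hg0, mul_right_comm b g w,
    Nat.gcd_mul_right, Nat.mul_dvd_mul_iff_right hg0, Nat.Coprime.gcd_mul_left_cancel_right _ hab.symm,
    Nat.gcd_comm w a]
  constructor
  · intro h; rw [h]; exact one_dvd b
  · intro h
    exact Nat.eq_one_of_dvd_coprimes hab (Nat.gcd_dvd_left a w) h

/-- The coprimality condition in the weight, split into its `2`-part and its odd part. -/
lemma coprime_two_pow_quotients_iff {x y z e τ k : ℕ} (hx : Odd x) (hz : Odd z)
    (hyz : y ∣ z) :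
    Nat.gcd (2 ^ k * (z / y)) (2 ^ (e - min e τ) * (x / Nat.gcd x y)) = 1 ↔
      (k = 0 ∨ e ≤ τ) ∧ Nat.gcd x z ∣ y := by
  have hy : 0 < y := Nat.pos_of_dvd_of_pos hyz hz.pos
  rw [gcd_two_pow_mul (hz.of_dvd_nat (Nat.div_dvd_of_dvd hyz))
    (hx.of_dvd_nat (Nat.div_dvd_of_dvd (Nat.gcd_dvd_left x y))), mul_eq_one,
    coprime_quotients_iff hyz hy, Nat.pow_eq_one]
  refine and_congr_left fun _ => ?_
  omega

lemma padicValNat_two_pow_mul {x : ℕ} (hx : Odd x) (e : ℕ) : padicValNat 2 (2 ^ e * x) = e := by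
  rw [padicValNat.mul (by positivity) hx.pos.ne', padicValNat.prime_pow,
    padicValNat.eq_zero_of_not_dvd (fun h => (Nat.not_even_iff_odd.2 hx) (even_iff_two_dvd.2 h)),
    add_zero]

/-- The hypothesis `a ≤ ν` makes the natural-number division exact. -/
lemma neg_one_pow_div {z ν a : ℕ} (hz : Odd z) (ha : a ≤ ν) :
    (-1 : ℚ) ^ (2 ^ ν * z / 2 ^ a) = if a = ν then -1 else 1 := by
  have := two_pow_mul_div (x := z) ha (one_dvd z)
  rw [mul_one, Nat.div_one] at this
  rw [this]
  split_ifs with h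
  · subst h; simpa using hz.neg_one_pow
  · refine Even.neg_one_pow (Even.mul_right ?_ z)
    exact (Nat.even_pow.2 ⟨even_two, by omega⟩)

/-! ### Evaluating the weight -/

/-- The local factor at `2` of the identity for `w_{g,t}(p)`: here `e`, `τ`, `ν` are the
`2`-adic valuations of `h`, `t` and `p - 1`. -/
lemma two_adic_weight {g : ℚ} (hg : g ≠ 0) {J : ℤ} (hJ : J = 1 ∨ J = -1) {e τ ν : ℕ}
    (hτν : τ ≤ ν) {A B : ℚ}
    (hA : e ≤ ν → A = if e = ν then -1 else 1)
    (hB : e + 1 ≤ ν → B = if e + 1 = ν then -1 else 1) :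
    (if 0 < g ∧ (ν - τ = 0 ∨ e ≤ τ) then
        1 + (if τ < e then 0 else if τ = e then -1 else 1) / 2 * (1 + A) * (J : ℚ)
      else if g < 0 ∧ ¬ τ < e ∧ e + 1 ≤ ν ∧ (ν - τ = 0 ∨ e ≤ τ) then
        1 + (if τ < e then 0 else if τ = e then -1 else 1) * B * (J : ℚ)
      else if g < 0 ∧ τ < e ∧ τ + 1 ≤ ν ∧ (ν - (τ + 1) = 0 ∨ e ≤ τ) then 2 else 0) *
        2 ^ min e τ =
      if min (e + 1) ν ≤ τ + 1 ∧ ((0 < g ∨ e + 1 < ν ↔ J = 1 ∨ ν ≤ e) ↔ min (e + 1) ν ≤ τ)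
      then 2 ^ min (e + 1) ν else 0 := by
  have hsign : (0 < g ∧ ¬ g < 0) ∨ (¬ 0 < g ∧ g < 0) := by
    rcases lt_or_gt_of_ne hg with hlt | hgt
    · exact Or.inr ⟨hlt.not_gt, hlt⟩
    · exact Or.inl ⟨hgt, hgt.not_gt⟩
  have hJ' : ((J = 1) = True ∧ (J : ℚ) = 1) ∨ ((J = 1) = False ∧ (J : ℚ) = -1) := by
    rcases hJ with rfl | rfl
    · exact Or.inl ⟨eq_self 1, by norm_num⟩
    · exact Or.inr ⟨eq_false (by norm_num), by norm_num⟩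
  clear hJ
  -- Only whether `ν` is `min e τ`, `min e τ + 1` or larger matters.
  have hcases : (τ < e ∧ ν = τ) ∨ (τ < e ∧ ν = τ + 1) ∨ (τ < e ∧ τ + 2 ≤ ν) ∨
      (τ = e ∧ ν = e) ∨ (e ≤ τ ∧ ν = e + 1) ∨ (e ≤ τ ∧ e + 2 ≤ ν) := by omega
  have hAB : e ≤ τ → (ν = e → A = -1) ∧ (e + 1 ≤ ν → A = 1) ∧
      (ν = e + 1 → B = -1) ∧ (e + 2 ≤ ν → B = 1) := by
    intro _
    refine ⟨fun h => ?_, fun h => ?_, fun h => ?_, fun h => ?_⟩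
    · rw [hA (by omega), if_pos h.symm]
    · rw [hA (by omega), if_neg (by omega)]
    · rw [hB (by omega), if_pos h.symm]
    · rw [hB (by omega), if_neg (by omega)]
  clear hA hB
  rcases hcases with ⟨h1, h2⟩ | ⟨h1, h2⟩ | ⟨h1, h2⟩ | ⟨h1, h2⟩ | ⟨h1, h2⟩ | ⟨h1, h2⟩
  · rw [min_eq_right (by omega : τ ≤ e), min_eq_right (by omega : ν ≤ e + 1), h2]
    clear hAB
    rcases hsign with ⟨s1, s2⟩ | ⟨s1, s2⟩ <;> rcases hJ' with ⟨j1, j2⟩ | ⟨j1, j2⟩ <;>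
      simp only [s1, s2, j1, j2, true_and, false_and, true_or, false_or, true_iff, iff_true, if_false] <;> split_ifs <;> first | (exfalso; omega) | (norm_num; try ring)
  · rw [min_eq_right (by omega : τ ≤ e), min_eq_right (by omega : ν ≤ e + 1), h2]
    clear hAB
    rcases hsign with ⟨s1, s2⟩ | ⟨s1, s2⟩ <;> rcases hJ' with ⟨j1, j2⟩ | ⟨j1, j2⟩ <;>
      simp only [s1, s2, j1, j2, true_and, false_and, true_or, false_or, true_iff, iff_true, if_false] <;> split_ifs <;> first | (exfalso; omega) | (norm_num; try ring)
  · have : τ + 2 ≤ min (e + 1) ν := by omega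
    generalize min (e + 1) ν = δ at *
    clear hAB
    rcases hsign with ⟨s1, s2⟩ | ⟨s1, s2⟩ <;> rcases hJ' with ⟨j1, j2⟩ | ⟨j1, j2⟩ <;>
      simp only [s1, s2, j1, j2, true_and, false_and, true_or, false_or, true_iff, iff_true, if_false] <;> split_ifs <;> first | (exfalso; omega) | (norm_num; try ring)
  · rw [min_eq_left (by omega : e ≤ τ), min_eq_right (by omega : ν ≤ e + 1),
      (hAB h1.ge).1 h2, h2]
    clear hAB
    rcases hsign with ⟨s1, s2⟩ | ⟨s1, s2⟩ <;> rcases hJ' with ⟨j1, j2⟩ | ⟨j1, j2⟩ <;>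
      simp only [s1, s2, j1, j2, true_and, false_and, true_or, false_or, true_iff, iff_true, if_false] <;> split_ifs <;> first | (exfalso; omega) | (norm_num; try ring)
  · rw [min_eq_left (by omega : e ≤ τ), min_eq_left (by omega : e + 1 ≤ ν),
      (hAB h1).2.1 h2.ge, (hAB h1).2.2.1 h2]
    clear hAB
    rcases hsign with ⟨s1, s2⟩ | ⟨s1, s2⟩ <;> rcases hJ' with ⟨j1, j2⟩ | ⟨j1, j2⟩ <;>
      simp only [s1, s2, j1, j2, true_and, false_and, true_or, false_or, true_iff, iff_true, if_false] <;> split_ifs <;> first | (exfalso; omega) | (norm_num; try ring)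
  · rw [min_eq_left (by omega : e ≤ τ), min_eq_left (by omega : e + 1 ≤ ν),
      (hAB h1).2.1 (by omega), (hAB h1).2.2.2 h2]
    clear hAB
    rcases hsign with ⟨s1, s2⟩ | ⟨s1, s2⟩ <;> rcases hJ' with ⟨j1, j2⟩ | ⟨j1, j2⟩ <;>
      simp only [s1, s2, j1, j2, true_and, false_and, true_or, false_or, true_iff, iff_true, if_false] <;> split_ifs <;> first | (exfalso; omega) | (norm_num; try ring)

/-- The weight in terms of `D = gcd(2h, p - 1)` and the exponent `α` of the coset representative
`±γ^{0 or h}`: the two sides agree prime by prime, and for odd primes both impose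
`gcd(h, p - 1) ∣ t` away from `2`. -/
lemma wgt_mul_gcd {g g₀ : ℚ} {h t p : ℕ} (hg : g ≠ 0) (hh : h ≠ 0) (hp : 1 < p)
    (h2 : 2 ∣ p - 1) (ht : t ∣ p - 1)
    (hJ : jacobiSym (discQuad g₀) p = 1 ∨ jacobiSym (discQuad g₀) p = -1) :
    wgt g g₀ h t p * (Nat.gcd h t : ℚ) =
      if Nat.gcd (2 * h) (p - 1) ∣ 2 * t ∧
          (Nat.gcd (2 * h) (p - 1) ∣ (if 0 < g then 0 else (p - 1) / 2) +
            (if jacobiSym (discQuad g₀) p = 1 then 0 else h) ↔ Nat.gcd (2 * h) (p - 1) ∣ t)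
      then (Nat.gcd (2 * h) (p - 1) : ℚ) else 0 := by
  have hn0 : p - 1 ≠ 0 := by omega
  have ht0 : t ≠ 0 := fun h0 => hn0 (Nat.eq_zero_of_zero_dvd (h0 ▸ ht))
  have hmod : ∀ m, p ≡ 1 [MOD m] ↔ m ∣ p - 1 := fun m => by
    rw [Nat.ModEq.comm, Nat.modEq_iff_dvd' hp.le]
  unfold wgt
  simp only [hmod]
  generalize jacobiSym (discQuad g₀) p = J at *
  generalize p - 1 = n at *
  have eα := dvd_add_iff_of_dvd_two_mul (D := Nat.gcd (2 * h) n)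
    (a := if 0 < g then 0 else n / 2) (b := if J = 1 then 0 else h)
    (by
      split_ifs
      · simp
      · rw [Nat.mul_div_cancel' h2]; exact Nat.gcd_dvd_right _ _)
    (by
      split_ifs
      · simp
      · exact Nat.gcd_dvd_left _ _)
  simp only [eα]
  clear eα
  obtain ⟨e, x, hx, rfl⟩ := Nat.exists_eq_two_pow_mul_odd hh
  obtain ⟨τ, y, hy, rfl⟩ := Nat.exists_eq_two_pow_mul_odd ht0
  obtain ⟨ν, z, hz, rfl⟩ := Nat.exists_eq_two_pow_mul_odd hn0
  have hν : 1 ≤ ν := by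
    have := (two_pow_mul_dvd_iff odd_one hz 1 ν).1 (by simpa using h2)
    exact this.1
  obtain ⟨hτν, hyz⟩ := (two_pow_mul_dvd_iff hy hz τ ν).1 ht
  have hG : Odd (Nat.gcd x z) := odd_gcd hx
  have e1 : Nat.gcd (2 * (2 ^ e * x)) (2 ^ ν * z) = 2 ^ min (e + 1) ν * Nat.gcd x z := by
    rw [← mul_assoc, ← pow_succ', gcd_two_pow_mul hx hz]
  have e2 : 2 * (2 ^ τ * y) = 2 ^ (τ + 1) * y := by rw [← mul_assoc, ← pow_succ']
  have e3 : 2 ^ ν * z / 2 = 2 ^ (ν - 1) * z := by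
    have := two_pow_mul_div (x := z) hν (one_dvd z)
    simpa using this
  have e4 : 2 ^ e * x / Nat.gcd (2 ^ e * x) (2 ^ τ * y) =
      2 ^ (e - min e τ) * (x / Nat.gcd x y) := by
    rw [gcd_two_pow_mul hx hy, two_pow_mul_div (min_le_left _ _) (Nat.gcd_dvd_left _ _)]
  have e5 : Nat.gcd (2 ^ ν * z / (2 ^ τ * y)) (2 ^ (e - min e τ) * (x / Nat.gcd x y)) = 1 ↔
      (ν - τ = 0 ∨ e ≤ τ) ∧ Nat.gcd x z ∣ y := by
    rw [two_pow_mul_div hτν hyz, coprime_two_pow_quotients_iff hx hz hyz]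
  have hxg : Odd (x / Nat.gcd x y) := hx.of_dvd_nat (Nat.div_dvd_of_dvd (Nat.gcd_dvd_left x y))
  have e6 : 2 ∣ 2 ^ (e - min e τ) * (x / Nat.gcd x y) ↔ τ < e := by
    have := two_pow_mul_dvd_iff odd_one hxg 1 (e - min e τ)
    simp only [pow_one, mul_one, isUnit_one, IsUnit.dvd, and_true] at this
    rw [this]; omega
  have e7 : 2 ^ (τ + 1) * y ∣ 2 ^ ν * z ↔ τ + 1 ≤ ν := by
    rw [two_pow_mul_dvd_iff hy hz]; simp [hyz]
  have e8 : Nat.lcm (2 ^ (e + 1)) (2 ^ τ * y) ∣ 2 ^ ν * z ↔ e + 1 ≤ ν := by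
    have := two_pow_mul_dvd_iff odd_one hz (e + 1) ν
    simp only [mul_one, isUnit_one, IsUnit.dvd, and_true] at this
    rw [Nat.lcm_dvd_iff, this]; simp [ht]
  have e9 : (τ + 1 ≤ ν ∧
      Nat.gcd (2 ^ ν * z / (2 ^ (τ + 1) * y)) (2 ^ (e - min e τ) * (x / Nat.gcd x y)) = 1) ↔
      τ + 1 ≤ ν ∧ (ν - (τ + 1) = 0 ∨ e ≤ τ) ∧ Nat.gcd x z ∣ y := and_congr_right fun hle => by
    rw [two_pow_mul_div hle hyz, coprime_two_pow_quotients_iff hx hz hyz]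
  have e10 : 2 ^ min (e + 1) ν * Nat.gcd x z ∣ (if 0 < g then 0 else 2 ^ (ν - 1) * z) ↔
      (0 < g ∨ e + 1 < ν) := by
    split_ifs with hpos
    · simp [hpos]
    · rw [two_pow_mul_dvd_iff hG hz]
      simp only [Nat.gcd_dvd_right, and_true, hpos, false_or]
      omega
  have e11 : 2 ^ min (e + 1) ν * Nat.gcd x z ∣ (if J = 1 then 0 else 2 ^ e * x) ↔
      (J = 1 ∨ ν ≤ e) := by
    split_ifs with hpos
    · simp [hpos]
    · rw [two_pow_mul_dvd_iff hG hx]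
      simp only [Nat.gcd_dvd_left, and_true, hpos, false_or]
      omega
  simp only [e1, e2, e3, e4]
  simp only [e10, e11, padicValNat_two_pow_mul hx, padicValNat_two_pow_mul hy, e5, e6, e7, e8, e9,
    two_pow_mul_dvd_iff hG hy, ht, true_and]
  rw [gcd_two_pow_mul hx hy]
  -- `gcd(x, z) ∣ y` is the condition at the odd primes; without it both sides vanish
  by_cases hP : Nat.gcd x z ∣ y
  swap
  · simp [hP]
  have hGG : Nat.gcd x z = Nat.gcd x y :=
    Nat.dvd_antisymm (Nat.dvd_gcd (Nat.gcd_dvd_left _ _) hP)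
      (Nat.dvd_gcd (Nat.gcd_dvd_left _ _) ((Nat.gcd_dvd_right _ _).trans hyz))
  simp only [hP, and_true, ← hGG]
  push_cast
  rw [← mul_assoc, two_adic_weight hg hJ hτν (neg_one_pow_div hz) (neg_one_pow_div hz), ite_mul,
    zero_mul]

/-! ### Assembling the identity -/

/-- The factor `t_h = t / gcd(t, h)` in `r_{g,t}` cancels against `gcd(h, t) / t`. -/
lemma rgt_mul_gcd_div (g g₀ : ℚ) (h t p : ℕ) (γ : (ZMod p)ˣ) (ht : t ≠ 0) :
    rgt g g₀ h t p γ * (Nat.gcd h t : ℚ) / (t : ℚ) =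
      rhoDen (ZMod p)ˣ (p - 1)
        ((if 0 < g then 1 else -1) * (if jacobiSym (discQuad g₀) p = 1 then 1 else γ ^ h)) h t := by
  have h1 : (Nat.gcd h t : ℚ) ≠ 0 := by
    exact_mod_cast Nat.gcd_ne_zero_right ht
  have h2 : (t : ℚ) ≠ 0 := by exact_mod_cast ht
  unfold rgt
  rw [Nat.gcd_comm t h, Nat.cast_div (Nat.gcd_dvd_right h t) h1]
  field_simp

lemma pow_half_eq_neg_one {p : ℕ} (hp : p.Prime) (hodd : Odd p) {γ : (ZMod p)ˣ}
    (hγ : orderOf γ = p - 1) : γ ^ ((p - 1) / 2) = -1 := by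
  have := Fact.mk hp
  have h2 := hp.two_le
  obtain ⟨k, hk⟩ := hodd
  have hk' : (p - 1) / 2 = k := by omega
  have hk0 : 0 < k := by omega
  rw [hk']
  have hsq : (γ ^ k) ^ 2 = 1 := by
    rw [← pow_mul, ← orderOf_dvd_iff_pow_eq_one, hγ]
    exact ⟨1, by omega⟩
  have hne : γ ^ k ≠ 1 := by
    rw [ne_eq, ← orderOf_dvd_iff_pow_eq_one, hγ]
    intro h
    have := Nat.le_of_dvd hk0 h
    omega
  have hsq' : ((γ ^ k : (ZMod p)ˣ) : ZMod p) ^ 2 = 1 := by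
    rw [← Units.val_pow_eq_pow_val, hsq, Units.val_one]
  rcases sq_eq_one_iff.1 hsq' with h | h
  · exact absurd (Units.ext h) hne
  · exact Units.ext (by simpa using h)

/-- the Möbius sum of the `r_{g,dt}(p)` equals `w_{g,t}(p)` times the
naive density (Corollary of Lemma 11 of the paper). -/
theorem stmt17 (g g₀ : ℚ) (h t : ℕ) (hd : Decomp g g₀ h) (ht : 1 ≤ t)
    (p : ℕ) (hp : p.Prime) (hodd : Odd p) (h0 : OrdZero g p)
    (hpd : ¬ (p : ℤ) ∣ discQuad g₀) (hp1 : p ≡ 1 [MOD t])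
    (γ : (ZMod p)ˣ) (hγ : ∀ x : (ZMod p)ˣ, x ∈ Subgroup.zpowers γ) :
    ∑ d ∈ ((p - 1) / t).divisors,
        (ArithmeticFunction.moebius d : ℚ) * rgt g g₀ h (d * t) p γ *
          (Nat.gcd h (d * t) : ℚ) / ((d * t : ℕ) : ℚ) =
      wgt g g₀ h t p * (Nat.gcd h t : ℚ) *
        (Nat.totient ((p - 1) / t) : ℚ) / ((p : ℚ) - 1) := by
  have := Fact.mk hp
  have hp2 := hp.two_le
  have hpn : 2 ∣ p - 1 := by obtain ⟨k, hk⟩ := hodd; exact ⟨k, by omega⟩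
  have htn : t ∣ p - 1 := (Nat.modEq_iff_dvd' hp.one_le).1 hp1.symm
  have hn0 : 0 < p - 1 := by omega
  have hord : orderOf γ = p - 1 := by
    rw [orderOf_eq_card_of_forall_mem_zpowers hγ, Nat.card_eq_fintype_card, ZMod.card_units]
  have hJ : jacobiSym (discQuad g₀) p = 1 ∨ jacobiSym (discQuad g₀) p = -1 := by
    refine jacobiSym.eq_one_or_neg_one ?_
    rw [Int.gcd_comm]
    exact Int.isCoprime_iff_gcd_eq_one.1
      (((Nat.prime_iff_prime_int.1 hp).coprime_iff_not_dvd).2 hpd)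
  have hw := wgt_mul_gcd (g₀ := g₀) hd.ne_zero (Nat.one_le_iff_ne_zero.1 hd.h_pos) hp2 hpn htn hJ
  have hcoset : (if 0 < g then 1 else -1) * (if jacobiSym (discQuad g₀) p = 1 then 1 else γ ^ h) =
      γ ^ ((if 0 < g then 0 else (p - 1) / 2) +
        (if jacobiSym (discQuad g₀) p = 1 then 0 else h)) := by
    rw [pow_add]
    split_ifs <;> simp [pow_half_eq_neg_one hp hodd hord]
  have hα : Nat.gcd (2 * h) (p - 1) ∣ 2 * ((if 0 < g then 0 else (p - 1) / 2) +
        (if jacobiSym (discQuad g₀) p = 1 then 0 else h)) := by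
    rw [mul_add]
    refine dvd_add ?_ ?_
    · split_ifs
      · simp
      · rw [Nat.mul_div_cancel' hpn]; exact Nat.gcd_dvd_right _ _
    · split_ifs
      · simp
      · exact Nat.gcd_dvd_left _ _
  have hpc : (p : ℚ) - 1 = ((p - 1 : ℕ) : ℚ) := by
    rw [Nat.cast_sub hp.one_le, Nat.cast_one]
  generalize (if 0 < g then 0 else (p - 1) / 2) +
        (if jacobiSym (discQuad g₀) p = 1 then 0 else h) = α at *
  have hterm : ∀ d ∈ ((p - 1) / t).divisors,
      (ArithmeticFunction.moebius d : ℚ) * rgt g g₀ h (d * t) p γ *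
          (Nat.gcd h (d * t) : ℚ) / ((d * t : ℕ) : ℚ) =
      (ArithmeticFunction.moebius d : ℚ) * (((Finset.range (p - 1)).filter fun k =>
          k ≡ α [MOD Nat.gcd (2 * h) (p - 1)] ∧ d * t ∣ k).card : ℚ) *
        ((Nat.gcd (2 * h) (p - 1) : ℚ) / ((p - 1 : ℕ) : ℚ)) := by
    intro d hdm
    have hdt : d * t ∣ p - 1 := by
      have := Nat.mul_dvd_mul_right (Nat.dvd_of_mem_divisors hdm) t
      rwa [Nat.div_mul_cancel htn] at this
    have hdt0 : d * t ≠ 0 := (Nat.pos_of_dvd_of_pos hdt hn0).ne'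
    rw [mul_assoc, mul_div_assoc, rgt_mul_gcd_div _ _ _ _ _ _ hdt0, hcoset,
      rhoDen_eq hord hγ _ _ _ hdt]
    ring
  rw [Finset.sum_congr rfl hterm, ← Finset.sum_mul, moebius_sum_eq hn0 htn,
    card_gcd_class htn (Nat.gcd_dvd_right _ _) hα, hw, hpc]
  split_ifs <;> push_cast <;> ring
end
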